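/- arXiv:2111.10699 — 2 statements merged into one kernel-verified Lean document; each statement's English description precedes it below -/
import Mathlib

section
/- Let G = (V,E) be a finite simple graph and let (E', E_W) be an STC+ labeling of G, i.e., E' is a set of non-edge pairs of G, E_W ⊆ E, and for every open wedge (i,j,k) centered at k at least one of {i,k} ∈ E_W, {j,k} ∈ E_W, or {i,j} ∈ E' holds. Then there exists a partition of V whose number of disagreements with respect to G is at most 2·(|E'| + |E_W|). -/
open Finset

/-- The finset of ordered pairs `(i, j)` with `i < j`, representing unordered pairs
of distinct elements of `V`. -/
def pairsLt (V : Type*) [Fintype V] [LinearOrder V] : Finset (V × V) :=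
  Finset.univ.filter fun p => p.1 < p.2

/-- `(i, j, k)` is an open wedge centered at `k`. -/
def IsOpenWedge {V : Type*} (G : SimpleGraph V) (i j k : V) : Prop :=
  G.Adj i k ∧ G.Adj j k ∧ i ≠ j ∧ ¬ G.Adj i j

/-- The number of disagreements of the partition `C` with respect to `G`. -/
def disagreements {V : Type*} [Fintype V] [LinearOrder V]
    (G : SimpleGraph V) [DecidableRel G.Adj] (C : V → ℕ) : ℕ :=
  ((pairsLt V).filter fun p =>
    (G.Adj p.1 p.2 ∧ C p.1 ≠ C p.2) ∨ (¬ G.Adj p.1 p.2 ∧ C p.1 = C p.2)).card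

/-!
Call the pairs of `E' ∪ E_W` marked, let `F` be the graph of marked pairs and let `H = G ∆ F`.
Repeatedly choose a pivot `k` among the remaining vertices and split off the cluster of `k` and its
remaining `H`-neighbours. A pair `{u, v}` meeting this cluster is a disagreement exactly when one of
the following holds but not the other: `{u, v}` is marked, or `{k, u, v}` spans exactly two edges
of `H`. A triple spanning exactly two edges of `H` contains a marked pair, since otherwise it would
be an unmarked open wedge of `G`. So, averaging over the pivots, at least a third of the pairs
`{u, v}` completing `k` to such a triple are marked, and for some pivot the disagreements caused
are at most twice the marked pairs removed.
-/

open scoped symmDiff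

section Counting

variable {α : Type*}

theorem sum_sum_sum_rotate {M : Type*} [AddCommMonoid M] (S : Finset α) (f : α → α → α → M) :
    ∑ a ∈ S, ∑ b ∈ S, ∑ c ∈ S, f b c a = ∑ a ∈ S, ∑ b ∈ S, ∑ c ∈ S, f a b c := by
  rw [sum_comm]
  exact sum_congr rfl fun _ _ => sum_comm

theorem exists_card_filter_le_three_mul {S : Finset α} (hS : S.Nonempty)
    {T : α → α → α → Prop} {R : α → α → Prop} [∀ a, DecidableRel (T a)] [DecidableRel R]
    (hrot : ∀ a b c, T a b c → T b c a)
    (hcover : ∀ a b c, T a b c → R a b ∨ R b c ∨ R c a) :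
    ∃ k ∈ S, #{p ∈ S ×ˢ S | T k p.1 p.2} ≤ 3 * #{p ∈ S ×ˢ S | T k p.1 p.2 ∧ R p.1 p.2} := by
  refine exists_le_of_sum_le hS ?_
  let f (a b c : α) : ℕ := if T a b c ∧ R b c then 1 else 0
  have hpoint (a b c : α) : (if T a b c then 1 else 0) ≤ f a b c + f b c a + f c a b := by
    grind
  simp only [card_filter, sum_product, ← mul_sum]
  calc ∑ a ∈ S, ∑ b ∈ S, ∑ c ∈ S, (if T a b c then 1 else 0)
      ≤ ∑ a ∈ S, ∑ b ∈ S, ∑ c ∈ S, (f a b c + f b c a + f c a b) := by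
        gcongr with a _ b _ c _
        exact hpoint a b c
    _ = 3 * ∑ a ∈ S, ∑ b ∈ S, ∑ c ∈ S, f a b c := by
        simp only [sum_add_distrib]
        rw [← sum_sum_sum_rotate S fun a b c => f c a b, sum_sum_sum_rotate S f]
        ring

theorem card_filter_xor_le_two_mul {s : Finset α} {T P Q : α → Prop} [DecidablePred T]
    [DecidablePred P] [DecidablePred Q] (hPT : ∀ x, P x → T x)
    (h : #{x ∈ s | P x} ≤ 3 * #{x ∈ s | P x ∧ Q x}) :
    #{x ∈ s | T x ∧ Xor (Q x) (P x)} ≤ 2 * #{x ∈ s | T x ∧ Q x} := by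
  have hP : #{x ∈ s | P x} = #{x ∈ s | P x ∧ Q x} + #{x ∈ s | P x ∧ ¬ Q x} := by
    rw [← card_filter_add_card_filter_not Q, filter_filter, filter_filter]
  have hQ : #{x ∈ s | T x ∧ Q x} = #{x ∈ s | P x ∧ Q x} + #{x ∈ s | T x ∧ Q x ∧ ¬ P x} := by
    rw [← card_filter_add_card_filter_not P, filter_filter, filter_filter]
    congr 2 <;> ext x <;> grind
  have hxor : #{x ∈ s | T x ∧ Xor (Q x) (P x)} =
      #{x ∈ s | P x ∧ ¬ Q x} + #{x ∈ s | T x ∧ Q x ∧ ¬ P x} := by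
    rw [← card_filter_add_card_filter_not P, filter_filter, filter_filter]
    congr 2 <;> ext x <;> grind [Xor]
  lia

end Counting

section Graphs

variable {V : Type*}

theorem symmDiff_adj_iff_xor (G H : SimpleGraph V) (u v : V) :
    (G ∆ H).Adj u v ↔ Xor (G.Adj u v) (H.Adj u v) := by
  simp [symmDiff_def, Xor]

theorem card_filter_pairsLt_adj [Fintype V] [LinearOrder V] (D : SimpleGraph V)
    [DecidableRel D.Adj] : #{p ∈ pairsLt V | D.Adj p.1 p.2} = #D.edgeFinset := by
  refine card_nbij (fun p => s(p.1, p.2)) (fun p hp => by simp_all) ?_ ?_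
  · rintro ⟨a, b⟩ hab ⟨c, d⟩ hcd h
    simp only [pairsLt, coe_filter, mem_filter, mem_univ, true_and, Set.mem_ofPred_eq] at hab hcd
    rcases Sym2.eq_iff.mp h with ⟨rfl, rfl⟩ | ⟨rfl, rfl⟩
    · rfl
    · exact absurd hab.1 hcd.1.not_gt
  · intro e he
    induction e with | _ a b
    have hab : D.Adj a b := by simpa using he
    rcases hab.ne.lt_or_gt with hlt | hgt
    · exact ⟨(a, b), by simp [pairsLt, hlt, hab], rfl⟩
    · exact ⟨(b, a), by simp [pairsLt, hgt, hab.symm], Sym2.eq_swap⟩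

theorem card_interedges_univ [Fintype V] (D : SimpleGraph V) [DecidableRel D.Adj]
    [Fintype D.edgeSet] : #(D.interedges univ univ) = 2 * #D.edgeFinset := by
  classical
  rw [D.interedges_def, univ_product_univ]
  convert D.two_mul_card_edgeFinset.symm

theorem card_edgeFinset_fromEdgeSet_le (E : Finset (Sym2 V))
    [Fintype (SimpleGraph.fromEdgeSet (E : Set (Sym2 V))).edgeSet] :
    #(SimpleGraph.fromEdgeSet (E : Set (Sym2 V))).edgeFinset ≤ #E :=
  card_le_card fun e he => by
    rw [SimpleGraph.mem_edgeFinset, SimpleGraph.edgeSet_fromEdgeSet] at he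
    exact he.1

/-- The cluster graph of the partition into the fibres of `C`: distinct vertices are adjacent when
they lie in the same part. The disagreements of the partition with `G` are the edges of
`G ∆ clusterGraph C`. -/
def clusterGraph {ι : Type*} (C : V → ι) : SimpleGraph V where
  Adj u v := u ≠ v ∧ C u = C v
  symm := ⟨fun _ _ h => ⟨h.1.symm, h.2.symm⟩⟩
  loopless := ⟨fun _ h => h.1 rfl⟩

theorem clusterGraph_adj {ι : Type*} {C : V → ι} {u v : V} :
    (clusterGraph C).Adj u v ↔ u ≠ v ∧ C u = C v :=
  Iff.rfl

theorem disagreements_eq_card_edgeFinset [Fintype V] [LinearOrder V] (G : SimpleGraph V)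
    [DecidableRel G.Adj] (C : V → ℕ) [DecidableRel (G ∆ clusterGraph C).Adj] :
    disagreements G C = #(G ∆ clusterGraph C).edgeFinset := by
  rw [← card_filter_pairsLt_adj, disagreements]
  congr 1
  refine filter_congr fun p hp => ?_
  have hne : p.1 ≠ p.2 := (mem_filter.mp hp).2.ne
  rw [symmDiff_adj_iff_xor, clusterGraph_adj]
  grind [Xor]

open Classical in
theorem card_interedges_eq_add (D : SimpleGraph V) (S : Finset V) (N : Set V) :
    #(D.interedges S S) = #(D.interedges {v ∈ S | v ∉ N} {v ∈ S | v ∉ N}) +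
      #{p ∈ S ×ˢ S | (p.1 ∈ N ∨ p.2 ∈ N) ∧ D.Adj p.1 p.2} := by
  rw [← card_filter_add_card_filter_not (fun p : V × V => p.1 ∉ N ∧ p.2 ∉ N)]
  congr 2 <;> ext p <;>
    simp only [SimpleGraph.mem_interedges_iff, mem_filter, mem_product] <;> tauto

end Graphs

section Wedges

variable {V : Type*} {G F H : SimpleGraph V}

/-- `F` marks a pair of every open wedge of `G`. For an STC+ labeling `(E', E_W)`, this holds for
the graph with edge set `E' ∪ E_W`. -/
def CoversOpenWedges (F G : SimpleGraph V) : Prop :=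
  ∀ i j k, IsOpenWedge G i j k → F.Adj i k ∨ F.Adj j k ∨ F.Adj i j

theorem coversOpenWedges_fromEdgeSet {E : Set (Sym2 V)}
    (hE : ∀ i j k, IsOpenWedge G i j k → s(i, k) ∈ E ∨ s(j, k) ∈ E ∨ s(i, j) ∈ E) :
    CoversOpenWedges (SimpleGraph.fromEdgeSet E) G := by
  intro i j k hwedge
  obtain ⟨hik, hjk, hij, -⟩ := id hwedge
  exact (hE i j k hwedge).imp (⟨·, hik.ne⟩) (Or.imp (⟨·, hjk.ne⟩) (⟨·, hij⟩))

/-- The vertices `a`, `b`, `c` span exactly two edges of `H`, that is, they form an open wedge with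
one of them as its center. -/
def IsOpenTriple (H : SimpleGraph V) (a b c : V) : Prop :=
  IsOpenWedge H a b c ∨ IsOpenWedge H b c a ∨ IsOpenWedge H c a b

theorem IsOpenTriple.rotate {a b c : V} (h : IsOpenTriple H a b c) : IsOpenTriple H b c a := by
  unfold IsOpenTriple at *
  tauto

theorem CoversOpenWedges.symmDiff (hF : CoversOpenWedges F G) : CoversOpenWedges F (G ∆ F) := by
  intro i j k hwedge
  by_contra! hunmarked
  obtain ⟨hik, hjk, hij⟩ := hunmarked
  have hwedgeG : IsOpenWedge G i j k := by
    simpa [IsOpenWedge, symmDiff_adj_iff_xor, Xor, hik, hjk, hij] using hwedge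
  simpa [hik, hjk, hij] using hF i j k hwedgeG

theorem CoversOpenWedges.adj_of_isOpenTriple (hF : CoversOpenWedges F H) {a b c : V}
    (h : IsOpenTriple H a b c) : F.Adj a b ∨ F.Adj b c ∨ F.Adj c a := by
  rcases h with h | h | h <;> grind [hF _ _ _ h, SimpleGraph.adj_comm]

end Wedges

section Pivot

variable {V : Type*} {G F H : SimpleGraph V} {k u v : V}

/-- The cluster split off by the pivot `k`: its closed neighbourhood in `H`. -/
def pivotCluster (H : SimpleGraph V) (k : V) : Set V := insert k (H.neighborSet k)

theorem mem_pivotCluster : v ∈ pivotCluster H k ↔ v = k ∨ H.Adj k v :=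
  Iff.rfl

open Classical in
/-- The partition with the new part `N` whose other parts are those of `C` outside of `N`. Shifting
the labels of `C` keeps the label `0` for the new part. -/
noncomputable def addCluster (N : Set V) (C : V → ℕ) (v : V) : ℕ :=
  if v ∈ N then 0 else C v + 1

theorem addCluster_eq_iff_of_mem {N : Set V} (C : V → ℕ) (h : u ∈ N ∨ v ∈ N) :
    addCluster N C u = addCluster N C v ↔ u ∈ N ∧ v ∈ N := by
  grind [addCluster]

theorem addCluster_eq_iff_of_notMem {N : Set V} (C : V → ℕ) (hu : u ∉ N) (hv : v ∉ N) :
    addCluster N C u = addCluster N C v ↔ C u = C v := by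
  simp [addCluster, hu, hv]

open Classical in
theorem interedges_symmDiff_clusterGraph_addCluster (G : SimpleGraph V) (S : Finset V)
    (N : Set V) (C : V → ℕ) :
    (G ∆ clusterGraph (addCluster N C)).interedges {v ∈ S | v ∉ N} {v ∈ S | v ∉ N} =
      (G ∆ clusterGraph C).interedges {v ∈ S | v ∉ N} {v ∈ S | v ∉ N} := by
  ext ⟨u, v⟩
  simp only [SimpleGraph.mk_mem_interedges_iff, mem_filter, symmDiff_adj_iff_xor, clusterGraph_adj]
  grind [addCluster_eq_iff_of_notMem]

theorem isOpenTriple_iff_xor (huv : u ≠ v) (h : u ∈ pivotCluster H k ∨ v ∈ pivotCluster H k) :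
    IsOpenTriple H k u v ↔ Xor (H.Adj u v) (u ∈ pivotCluster H k ∧ v ∈ pivotCluster H k) := by
  simp only [mem_pivotCluster] at *
  grind [IsOpenTriple, IsOpenWedge, Xor, SimpleGraph.adj_comm, SimpleGraph.irrefl]

theorem IsOpenTriple.mem_pivotCluster_or_mem (h : IsOpenTriple H k u v) :
    u ∈ pivotCluster H k ∨ v ∈ pivotCluster H k := by
  grind [IsOpenTriple, IsOpenWedge, mem_pivotCluster, SimpleGraph.adj_comm]

theorem symmDiff_clusterGraph_addCluster_adj_iff_xor (C : V → ℕ)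
    (h : u ∈ pivotCluster (G ∆ F) k ∨ v ∈ pivotCluster (G ∆ F) k) :
    (G ∆ clusterGraph (addCluster (pivotCluster (G ∆ F) k) C)).Adj u v ↔
      Xor (F.Adj u v) (IsOpenTriple (G ∆ F) k u v) := by
  rcases eq_or_ne u v with rfl | huv
  · simp [IsOpenTriple, IsOpenWedge, Xor, SimpleGraph.adj_comm]
  · rw [isOpenTriple_iff_xor huv h, symmDiff_adj_iff_xor, symmDiff_adj_iff_xor, clusterGraph_adj,
      addCluster_eq_iff_of_mem C h]
    grind [Xor]

open Classical in
theorem card_disagreements_pivot_le {S : Finset V} (C : V → ℕ)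
    (hk : #{p ∈ S ×ˢ S | IsOpenTriple (G ∆ F) k p.1 p.2} ≤
      3 * #{p ∈ S ×ˢ S | IsOpenTriple (G ∆ F) k p.1 p.2 ∧ F.Adj p.1 p.2}) :
    #{p ∈ S ×ˢ S | (p.1 ∈ pivotCluster (G ∆ F) k ∨ p.2 ∈ pivotCluster (G ∆ F) k) ∧
        (G ∆ clusterGraph (addCluster (pivotCluster (G ∆ F) k) C)).Adj p.1 p.2} ≤
      2 * #{p ∈ S ×ˢ S | (p.1 ∈ pivotCluster (G ∆ F) k ∨ p.2 ∈ pivotCluster (G ∆ F) k) ∧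
        F.Adj p.1 p.2} := by
  refine le_trans (card_le_card fun p hp => ?_) <| card_filter_xor_le_two_mul
    (fun (p : V × V) (hp : IsOpenTriple (G ∆ F) k p.1 p.2) => hp.mem_pivotCluster_or_mem) hk
  obtain ⟨hpS, hmeets, hdisagree⟩ := mem_filter.mp hp
  exact mem_filter.mpr
    ⟨hpS, hmeets, (symmDiff_clusterGraph_addCluster_adj_iff_xor C hmeets).mp hdisagree⟩

open Classical in
theorem CoversOpenWedges.exists_card_interedges_le (hF : CoversOpenWedges F G) (S : Finset V) :
    ∃ C : V → ℕ, #((G ∆ clusterGraph C).interedges S S) ≤ 2 * #(F.interedges S S) := by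
  induction S using Finset.strongInduction with
  | H S ih =>
  rcases S.eq_empty_or_nonempty with rfl | hS
  · exact ⟨0, by simp⟩
  obtain ⟨k, hkS, hk⟩ := exists_card_filter_le_three_mul hS
    (T := IsOpenTriple (G ∆ F)) (R := F.Adj) (fun _ _ _ => IsOpenTriple.rotate)
    (fun _ _ _ => hF.symmDiff.adj_of_isOpenTriple)
  let N := pivotCluster (G ∆ F) k
  obtain ⟨C, hC⟩ := ih {v ∈ S | v ∉ N}
    (filter_ssubset.mpr ⟨k, hkS, not_not.mpr (Set.mem_insert k _)⟩)
  refine ⟨addCluster N C, ?_⟩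
  rw [card_interedges_eq_add _ S N, card_interedges_eq_add F S N,
    interedges_symmDiff_clusterGraph_addCluster, mul_add]
  exact add_le_add hC (card_disagreements_pivot_le C hk)

theorem CoversOpenWedges.exists_disagreements_le [Fintype V] [LinearOrder V] [DecidableRel G.Adj]
    [Fintype F.edgeSet] (hF : CoversOpenWedges F G) :
    ∃ C : V → ℕ, disagreements G C ≤ 2 * #F.edgeFinset := by
  classical
  obtain ⟨C, hC⟩ := hF.exists_card_interedges_le univ
  rw [card_interedges_univ, card_interedges_univ] at hC
  refine ⟨C, ?_⟩
  rw [disagreements_eq_card_edgeFinset]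
  lia

end Pivot

/-- Theorem: any STC+ labeling `(E', E_W)` of `G` can be rounded into a partition of the
vertices with at most `2 (|E'| + |E_W|)` disagreements. -/
theorem stmt3 {V : Type*} [Fintype V] [LinearOrder V]
    (G : SimpleGraph V) [DecidableRel G.Adj]
    (E' EW : Finset (Sym2 V))
    (hE' : ∀ e ∈ E', ¬ e.IsDiag ∧ e ∉ G.edgeSet)
    (hEW : ∀ e ∈ EW, e ∈ G.edgeSet)
    (hlabel : ∀ i j k : V, IsOpenWedge G i j k →
      s(i, k) ∈ EW ∨ s(j, k) ∈ EW ∨ s(i, j) ∈ E') :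
    ∃ C : V → ℕ, disagreements G C ≤ 2 * (E'.card + EW.card) := by
  have hcovers : CoversOpenWedges (SimpleGraph.fromEdgeSet ↑(E' ∪ EW)) G :=
    coversOpenWedges_fromEdgeSet fun i j k hwedge => by
      grind [hlabel i j k hwedge]
  obtain ⟨C, hC⟩ := hcovers.exists_disagreements_le
  refine ⟨C, hC.trans (Nat.mul_le_mul_left 2 ?_)⟩
  exact (card_edgeFinset_fromEdgeSet_le (E' ∪ EW)).trans (card_union_le E' EW)
end

section
/- Let G = (V,E) be a finite simple graph and let M be a collection of open wedges of G that is pairwise edge-disjoint: no edge of G belongs to two distinct wedges of M, where the edges of a wedge (i,j,k) centered at k are {i,k} and {j,k}. Then every partition of V into cliques of G has at least |M| cut edges. -/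
open Finset

/-- `C` is a partition of the vertex set into cliques of `G`. -/
def IsCliquePartition {V : Type*} (G : SimpleGraph V) (C : V → ℕ) : Prop :=
  ∀ i j, i ≠ j → C i = C j → G.Adj i j

/-- The number of cut edges of a partition `C`. -/
def cutEdges {V : Type*} [Fintype V] [LinearOrder V]
    (G : SimpleGraph V) [DecidableRel G.Adj] (C : V → ℕ) : ℕ :=
  ((pairsLt V).filter fun p => G.Adj p.1 p.2 ∧ C p.1 ≠ C p.2).card

/-- The two edges of a wedge `(i, j, k)` centered at `k`, namely `{i,k}` and `{j,k}`. -/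
def wedgeEdges {V : Type*} [DecidableEq V] (t : V × V × V) : Finset (Sym2 V) :=
  {s(t.1, t.2.2), s(t.2.1, t.2.2)}

/-!
The endpoints `i`, `j` of an open wedge centered at `k` are distinct and non-adjacent, so they lie
in different parts of a clique partition, and `k` is separated from at least one of them. Hence
each wedge contains a cut edge, and edge-disjoint wedges contain different ones.
-/

theorem encard_le_encard_of_pairwiseDisjoint {ι α : Type*} {M : Set ι} {f : ι → Finset α}
    {s : Set α} (hdisj : M.PairwiseDisjoint f) (hmeet : ∀ i ∈ M, ∃ a ∈ f i, a ∈ s) :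
    M.encard ≤ s.encard := by
  choose rep rep_mem rep_mem_s using hmeet
  let repEmbedding : M ↪ s :=
    { toFun := fun i => ⟨rep i i.2, rep_mem_s i i.2⟩
      inj' := fun i j hij => Subtype.ext <| hdisj.elim_finset i.2 j.2 (rep i i.2) (rep_mem i i.2) <|
        Subtype.mk.inj hij ▸ rep_mem j j.2 }
  exact repEmbedding.encard_le

/-- The edges of `G` whose endpoints lie in different parts of the partition of `V` into the fibers
of `C`, as unordered pairs: the set that `cutEdges` counts. The parts may be labelled by any
type. -/
def cutEdgeSet {V α : Type*} (G : SimpleGraph V) (C : V → α) : Set (Sym2 V) :=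
  {e ∈ G.edgeSet | ¬ (e.map C).IsDiag}

section CutEdgeSet

variable {V α : Type*} {G : SimpleGraph V} {C : V → α} {i j k : V}

theorem mk_mem_cutEdgeSet : s(i, j) ∈ cutEdgeSet G C ↔ G.Adj i j ∧ C i ≠ C j := by
  simp [cutEdgeSet]

theorem IsOpenWedge.ne_of_isClique (h : IsOpenWedge G i j k)
    (hC : ∀ c, G.IsClique (C ⁻¹' {c})) : C i ≠ C j := by
  obtain ⟨-, -, hij, hnadj⟩ := h
  exact fun hCij => hnadj (hC (C j) hCij rfl hij)

theorem IsOpenWedge.exists_mem_wedgeEdges_mem_cutEdgeSet [DecidableEq V]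
    (h : IsOpenWedge G i j k) (hC : ∀ c, G.IsClique (C ⁻¹' {c})) :
    ∃ e ∈ wedgeEdges (i, j, k), e ∈ cutEdgeSet G C := by
  have hCij : C i ≠ C j := h.ne_of_isClique hC
  obtain ⟨hik, hjk, -, -⟩ := h
  rcases hCij.ne_or_ne (C k) with hCik | hCjk
  · exact ⟨s(i, k), by simp [wedgeEdges], mk_mem_cutEdgeSet.2 ⟨hik, hCik⟩⟩
  · exact ⟨s(j, k), by simp [wedgeEdges], mk_mem_cutEdgeSet.2 ⟨hjk, hCjk⟩⟩

end CutEdgeSet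

theorem IsCliquePartition.isClique_preimage {V : Type*} {G : SimpleGraph V} {C : V → ℕ}
    (hC : IsCliquePartition G C) (c : ℕ) : G.IsClique (C ⁻¹' {c}) :=
  fun i hi j hj hij => hC i j hij (hi.trans hj.symm)

section LinearOrder

variable {V : Type*} [Fintype V] [LinearOrder V]

theorem mem_pairsLt {p : V × V} : p ∈ pairsLt V ↔ p.1 < p.2 := by
  simp [pairsLt]

theorem injOn_sym2Mk_pairsLt : Set.InjOn (fun p : V × V => s(p.1, p.2)) (pairsLt V) := by
  rintro ⟨a, b⟩ hab ⟨c, d⟩ hcd h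
  rcases Sym2.eq_iff.1 h with ⟨rfl, rfl⟩ | ⟨rfl, rfl⟩
  · rfl
  · exact absurd (mem_pairsLt.1 hab) (mem_pairsLt.1 hcd).asymm

theorem image_sym2Mk_cutPairs_eq_cutEdgeSet (G : SimpleGraph V) [DecidableRel G.Adj] (C : V → ℕ) :
    (fun p : V × V => s(p.1, p.2)) '' ((pairsLt V).filter fun p => G.Adj p.1 p.2 ∧ C p.1 ≠ C p.2) =
      cutEdgeSet G C := by
  ext e
  constructor
  · rintro ⟨p, hp, rfl⟩
    exact mk_mem_cutEdgeSet.2 (mem_filter.1 hp).2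
  · induction e with | _ a b
    intro he
    obtain ⟨hab, hCab⟩ := mk_mem_cutEdgeSet.1 he
    rcases hab.ne.lt_or_gt with hlt | hgt
    · exact ⟨(a, b), mem_filter.2 ⟨mem_pairsLt.2 hlt, hab, hCab⟩, rfl⟩
    · exact ⟨(b, a), mem_filter.2 ⟨mem_pairsLt.2 hgt, hab.symm, hCab.symm⟩, Sym2.eq_swap⟩

theorem encard_cutEdgeSet (G : SimpleGraph V) [DecidableRel G.Adj] (C : V → ℕ) :
    (cutEdgeSet G C).encard = cutEdges G C := by
  rw [← image_sym2Mk_cutPairs_eq_cutEdgeSet,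
    (injOn_sym2Mk_pairsLt.mono (coe_subset.2 (filter_subset _ _))).encard_image,
    Set.encard_coe_eq_coe_finsetCard, cutEdges]

end LinearOrder

theorem stmt10_general {V α : Type*} [DecidableEq V] (G : SimpleGraph V) (M : Set (V × V × V))
    (hM : ∀ t ∈ M, IsOpenWedge G t.1 t.2.1 t.2.2) (hdisj : M.PairwiseDisjoint wedgeEdges)
    (C : V → α) (hC : ∀ c, G.IsClique (C ⁻¹' {c})) :
    M.encard ≤ (cutEdgeSet G C).encard :=
  encard_le_encard_of_pairwiseDisjoint hdisj fun t ht =>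
    (hM t ht).exists_mem_wedgeEdges_mem_cutEdgeSet hC

/-- An edge-disjoint collection of open wedges lower bounds the number of cut edges of
every clique partition. -/
theorem stmt10 {V : Type*} [Fintype V] [LinearOrder V]
    (G : SimpleGraph V) [DecidableRel G.Adj]
    (M : Finset (V × V × V))
    (hM : ∀ t ∈ M, IsOpenWedge G t.1 t.2.1 t.2.2)
    (hdisj : ∀ t₁ ∈ M, ∀ t₂ ∈ M, t₁ ≠ t₂ → Disjoint (wedgeEdges t₁) (wedgeEdges t₂)) :
    ∀ C : V → ℕ, IsCliquePartition G C → M.card ≤ cutEdges G C := by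
  intro C hC
  simpa [encard_cutEdgeSet] using stmt10_general G M hM hdisj C hC.isClique_preimage
end
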